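/- arXiv:1609.07670 — 2 statements merged into one kernel-verified Lean document; each statement's English description precedes it below -/
import Mathlib

section
/- There is an absolute constant c > 0 such that for every integer n > 1, the ordered Ramsey number of the square of the path satisfies r(P_n^2, P_n^2) < c · n^{19.487}. -/
/-!
The proof gives `r(P_n^2, P_n^2) ≤ 100 * n ^ 18`, by showing that any coloring of a vertex set `S`
with `|S| ≥ 100 * (s * m) ^ 9` contains a red `P_s^2` or a blue `P_m^2` (`sqPath_or_sqPath`).

The key is a density statement (`exists_rich_edge`): if `|S| = N ≥ 100`, some edge `uv`, `u < v`,
has `d` common neighbours to the left of `u` and `e` common neighbours to the right of `v`, all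
joined to `u` and `v` in the color of `uv`, with `d * e ≥ N ^ 2 / 4 ^ 9`. Indeed `R(4, 4) ≤ 20`, so
every `20`-element subset of `S` contains a monochromatic quadruple `l < u < v < r`; averaging, at
least a `1 / 4845` proportion of all quadruples is monochromatic, and some pair `(u, v)` is the
middle of many of them.

If `uv` is red, say, apply induction inside the two common neighbourhoods, with lengths `a` and
`b` as large as their sizes `d` and `e` permit. Unless a blue `P_m^2` appears, this gives a red
`P_a^2` on the left and a red `P_b^2` on the right, which `uv` joins to a red `P_{a+b+2}^2`
(`SqPathIn.glue`). By the inequality of arithmetic and geometric means, `d * e ≥ N ^ 2 / 4 ^ 9`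
forces `a + b + 2 ≥ s` (`exists_split`); the exponent `9` is chosen so that halving the length
pays exactly for the loss of the factor `4 ^ 9`.
-/

/-!
Colorings are maps from finite sets of naturals to `Bool`,
with `true` = red and `false` = blue.  All structures live inside
the vertex set `{1, ..., N}`, i.e. `Finset.Icc 1 N`.
-/

/-- A blue ordered copy of the `k`-uniform tight path on `n` vertices inside `{1,...,N}`:
a strictly increasing sequence `x 0 < x 1 < ⋯ < x (n-1)` of elements of `{1,...,N}`
all of whose consecutive `k`-element windows are blue. -/
def HasBlueTightPath (k n N : ℕ) (χ : Finset ℕ → Bool) : Prop :=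
  ∃ x : ℕ → ℕ, StrictMono x ∧ (∀ i < n, x i ∈ Finset.Icc 1 N) ∧
    ∀ j, j + k ≤ n → χ ((Finset.range k).image fun i => x (j + i)) = false

/-- A red copy of the complete `k`-uniform hypergraph on `s` vertices inside `{1,...,N}`:
a set of `s` vertices all of whose `k`-element subsets are red. -/
def HasRedClique (k s N : ℕ) (χ : Finset ℕ → Bool) : Prop :=
  ∃ S : Finset ℕ, S ⊆ Finset.Icc 1 N ∧ S.card = s ∧
    ∀ e ⊆ S, e.card = k → χ e = true

/-- The Ramsey number `r_k(s, P_n)`. -/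
noncomputable def cliquePathRamsey (k s n : ℕ) : ℕ :=
  sInf {N | ∀ χ : Finset ℕ → Bool, HasRedClique k s N χ ∨ HasBlueTightPath k n N χ}

/-- An ordered copy of the path power `P_m^ℓ` in color `c` inside `{1,...,N}`:
a strictly increasing sequence `x 0 < ⋯ < x (m-1)` in `{1,...,N}` with
`χ {x i, x j} = c` whenever `i < j < m` and `j - i ≤ ℓ`. -/
def HasPowPath (ℓ m N : ℕ) (c : Bool) (χ : Finset ℕ → Bool) : Prop :=
  ∃ x : ℕ → ℕ, StrictMono x ∧ (∀ i < m, x i ∈ Finset.Icc 1 N) ∧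
    ∀ i j, i < j → j < m → j - i ≤ ℓ → χ {x i, x j} = c

/-- The ordered Ramsey number `r(P_a^ℓ, P_b^ℓ)`. -/
noncomputable def powPathRamsey (ℓ a b : ℕ) : ℕ :=
  sInf {N | ∀ χ : Finset ℕ → Bool, HasPowPath ℓ a N true χ ∨ HasPowPath ℓ b N false χ}

/-- A set of `s` vertices inside `{1,...,N}` spanning at least `t` red `k`-element subsets. -/
def HasRedSpread (k s t N : ℕ) (χ : Finset ℕ → Bool) : Prop :=
  ∃ S : Finset ℕ, S ⊆ Finset.Icc 1 N ∧ S.card = s ∧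
    t ≤ ((Finset.powersetCard k S).filter fun e => χ e = true).card

/-- The Ramsey number `r_k(s, t; P_n)`. -/
noncomputable def spreadPathRamsey (k s t n : ℕ) : ℕ :=
  sInf {N | ∀ χ : Finset ℕ → Bool, HasRedSpread k s t N χ ∨ HasBlueTightPath k n N χ}

/-- A set `S` of `k+1` vertices inside `{1,...,N}` spanning at least `t` red `k`-element
subsets, one of which consists of the `k` smallest vertices of `S` (i.e. `S` minus its
maximum element `v`). -/
def HasRedInitialSpread (k t N : ℕ) (χ : Finset ℕ → Bool) : Prop :=
  ∃ S : Finset ℕ, S ⊆ Finset.Icc 1 N ∧ S.card = k + 1 ∧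
    (∃ v ∈ S, (∀ u ∈ S, u ≤ v) ∧ χ (S.erase v) = true) ∧
    t ≤ ((Finset.powersetCard k S).filter fun e => χ e = true).card

/-- The Ramsey number `f_k(k+1, t; P_n)`: the minimum `N` such that every coloring of the
`k`-sets of `{1,...,N}` has a blue tight path on `n` vertices or a set of `k+1` vertices
spanning at least `t` red `k`-sets, one of which consists of its `k` smallest vertices. -/
noncomputable def initialSpreadPathRamsey (k t n : ℕ) : ℕ :=
  sInf {N | ∀ χ : Finset ℕ → Bool, HasRedInitialSpread k t N χ ∨ HasBlueTightPath k n N χ}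

/-- A blue ordered copy of the `k`-uniform broom `B_{a,m}` inside `{1,...,N}`:
vertices `v 0 < ⋯ < v (a-1) < w 0 < ⋯ < w (m-1)`, every consecutive `k`-window of the
`v`'s is blue, and (provided `a ≥ k-1`) for each `j` the `k`-set consisting of the last
`k-1` of the `v`'s together with `w j` is blue. -/
def HasBlueBroom (k a m N : ℕ) (χ : Finset ℕ → Bool) : Prop :=
  ∃ v w : ℕ → ℕ, StrictMono v ∧ StrictMono w ∧
    (∀ i < a, v i ∈ Finset.Icc 1 N) ∧ (∀ j < m, w j ∈ Finset.Icc 1 N) ∧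
    (∀ i < a, ∀ j < m, v i < w j) ∧
    (∀ j, j + k ≤ a → χ ((Finset.range k).image fun i => v (j + i)) = false) ∧
    (k - 1 ≤ a → ∀ j < m,
      χ (insert (w j) ((Finset.range (k - 1)).image fun i => v (a - (k - 1) + i))) = false)

/-- The Ramsey number `r_3(4, 3; B_{a,m})` for the `3`-uniform broom. -/
noncomputable def spreadBroomRamsey3 (a m : ℕ) : ℕ :=
  sInf {N | ∀ χ : Finset ℕ → Bool, HasRedSpread 3 4 3 N χ ∨ HasBlueBroom 3 a m N χ}

/-- The tower function: `twr 1 x = x` and `twr (i+1) x = 2 ^ twr i x`. -/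
def twr (i x : ℕ) : ℕ := (fun y => 2 ^ y)^[i - 1] x

/-- The real tower function: `rtwr 1 x = x` and `rtwr (i+1) x = 2 ^ rtwr i x`. -/
noncomputable def rtwr (i : ℕ) (x : ℝ) : ℝ := (fun y => (2 : ℝ) ^ y)^[i - 1] x

/-- An increasing copy of the square of the path on `m` vertices, with vertices in `S` and all
edges of color `c`. Only the values `x i` with `i < m` matter. -/
def SqPathIn (χ : Finset ℕ → Bool) (c : Bool) (m : ℕ) (S : Finset ℕ) : Prop :=
  ∃ x : ℕ → ℕ, (∀ i j, i < j → j < m → x i < x j) ∧ (∀ i < m, x i ∈ S) ∧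
    ∀ i j, i < j → j < m → j - i ≤ 2 → χ {x i, x j} = c

/-- The vertices of `S` to the left of `u` joined to both `u` and `v` in the color of the
edge `uv`. -/
def leftNbrs (χ : Finset ℕ → Bool) (S : Finset ℕ) (u v : ℕ) : Finset ℕ :=
  S.filter fun l => l < u ∧ χ {l, u} = χ {u, v} ∧ χ {l, v} = χ {u, v}

/-- The vertices of `S` to the right of `v` joined to both `u` and `v` in the color of the
edge `uv`. -/
def rightNbrs (χ : Finset ℕ → Bool) (S : Finset ℕ) (u v : ℕ) : Finset ℕ :=
  S.filter fun r => v < r ∧ χ {u, r} = χ {u, v} ∧ χ {v, r} = χ {u, v}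

/-! ### A monochromatic clique on four vertices -/

/-- The Erdős–Szekeres bound, with cliques recorded as increasing lists: the least vertex is
put in front of a clique found in its red or in its blue neighbourhood. -/
lemma exists_clique_list (χ : Finset ℕ → Bool) (a b : ℕ) (T : Finset ℕ)
    (hT : (a + b).choose a ≤ T.card) :
    (∃ l : List ℕ, l.length = a + 1 ∧ (∀ x ∈ l, x ∈ T) ∧
      l.Pairwise fun x y => x < y ∧ χ {x, y} = true) ∨
    (∃ l : List ℕ, l.length = b + 1 ∧ (∀ x ∈ l, x ∈ T) ∧
      l.Pairwise fun x y => x < y ∧ χ {x, y} = false) := by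
  induction hn : a + b generalizing a b T with
  | zero =>
    obtain ⟨rfl, rfl⟩ : a = 0 ∧ b = 0 := by omega
    obtain ⟨x, hx⟩ := Finset.card_pos.mp (by simpa using hT : 0 < T.card)
    exact Or.inl ⟨[x], by simp [hx]⟩
  | succ n ih =>
    have hpos : 0 < T.card := lt_of_lt_of_le (Nat.choose_pos (by omega)) hT
    obtain ⟨x, hx⟩ := Finset.card_pos.mp hpos
    rcases a with _ | a
    · exact Or.inl ⟨[x], by simp [hx]⟩
    rcases b with _ | b
    · exact Or.inr ⟨[x], by simp [hx]⟩
    clear hx x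
    set x := T.min' (Finset.card_pos.mp hpos) with hxdef
    have hx : x ∈ T := Finset.min'_mem _ _
    have hlt : ∀ y ∈ T.erase x, x < y := fun y hy =>
      Finset.min'_lt_of_mem_erase_min' _ _ hy
    have hcard := Finset.card_filter_add_card_filter_not (s := T.erase x)
      (fun y => χ {x, y} = true)
    rw [Finset.card_erase_of_mem hx] at hcard
    have hpascal : (a + 1 + (b + 1)).choose (a + 1)
        = (a + (b + 1)).choose a + (a + 1 + b).choose (a + 1) := by
      have h := Nat.choose_succ_succ (a + b + 1) a
      have e1 : a + 1 + (b + 1) = (a + b + 1).succ := by omega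
      have e2 : a + (b + 1) = a + b + 1 := by omega
      have e3 : a + 1 + b = a + b + 1 := by omega
      rw [e1, e2, e3, ← h]
    -- Prepending `x` to a clique of color `c` in its `c`-neighbourhood.
    have hcons : ∀ (c : Bool) (U : Finset ℕ) (k : ℕ), (∀ y ∈ U, y ∈ T.erase x ∧ χ {x, y} = c) →
        (∃ l : List ℕ, l.length = k ∧ (∀ y ∈ l, y ∈ U) ∧
          l.Pairwise fun x y => x < y ∧ χ {x, y} = c) →
        ∃ l : List ℕ, l.length = k + 1 ∧ (∀ y ∈ l, y ∈ T) ∧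
          l.Pairwise fun x y => x < y ∧ χ {x, y} = c := by
      rintro c U k hU ⟨l, hl, hlU, hp⟩
      refine ⟨x :: l, by simp [hl], ?_, ?_⟩
      · intro y hy
        rcases List.mem_cons.mp hy with rfl | hy
        · exact hx
        · exact Finset.mem_of_mem_erase (hU y (hlU y hy)).1
      · refine List.pairwise_cons.mpr ⟨fun y hy => ?_, hp⟩
        exact ⟨hlt y (hU y (hlU y hy)).1, (hU y (hlU y hy)).2⟩
    by_cases hr : (a + (b + 1)).choose a ≤ ((T.erase x).filter fun y => χ {x, y} = true).card
    · rcases ih a (b + 1) _ hr (by omega) with h | ⟨l, h1, h2, h3⟩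
      · exact Or.inl (hcons true _ _ (fun y hy => Finset.mem_filter.mp hy) h)
      · exact Or.inr ⟨l, h1, fun y hy =>
          Finset.mem_of_mem_erase (Finset.mem_filter.mp (h2 y hy)).1, h3⟩
    · have hb : (a + 1 + b).choose (a + 1)
          ≤ ((T.erase x).filter fun y => ¬ χ {x, y} = true).card := by omega
      rcases ih (a + 1) b _ hb (by omega) with ⟨l, h1, h2, h3⟩ | h
      · exact Or.inl ⟨l, h1, fun y hy =>
          Finset.mem_of_mem_erase (Finset.mem_filter.mp (h2 y hy)).1, h3⟩
      · refine Or.inr (hcons false _ _ (fun y hy => ?_) h)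
        simpa using Finset.mem_filter.mp hy

/-- Among twenty vertices some edge `uv` has a left and a right common neighbour in its own
color, because `R(4, 4) ≤ 20`. -/
lemma exists_four (χ : Finset ℕ → Bool) (T : Finset ℕ) (hT : 20 ≤ T.card) :
    ∃ u ∈ T, ∃ v ∈ T, u < v ∧ (leftNbrs χ T u v).Nonempty ∧ (rightNbrs χ T u v).Nonempty := by
  have key : ∀ c : Bool, (∃ l : List ℕ, l.length = 3 + 1 ∧ (∀ x ∈ l, x ∈ T) ∧
      l.Pairwise fun x y => x < y ∧ χ {x, y} = c) →
      ∃ u ∈ T, ∃ v ∈ T, u < v ∧ (leftNbrs χ T u v).Nonempty ∧ (rightNbrs χ T u v).Nonempty := by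
    rintro c ⟨l, hl, hm, hp⟩
    match l, hl with
    | [l, u, v, r], _ =>
      simp only [List.pairwise_cons, List.mem_cons, List.not_mem_nil, or_false] at hp
      obtain ⟨hl, hu, hv, -⟩ := hp
      have lu := hl u (by simp)
      have lv := hl v (by simp)
      have uv := hu v (by simp)
      have ur := hu r (by simp)
      have vr := hv r rfl
      refine ⟨u, hm u (by simp), v, hm v (by simp), uv.1, ⟨l, ?_⟩, ⟨r, ?_⟩⟩
      · exact Finset.mem_filter.mpr
          ⟨hm l (by simp), lu.1, lu.2.trans uv.2.symm, lv.2.trans uv.2.symm⟩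
      · exact Finset.mem_filter.mpr
          ⟨hm r (by simp), vr.1, ur.2.trans uv.2.symm, vr.2.trans uv.2.symm⟩
  have h20 : (3 + 3).choose 3 ≤ T.card := le_trans (by decide) hT
  rcases exists_clique_list χ 3 3 T h20 with h | h
  · exact key true h
  · exact key false h

/-! ### An edge with many common neighbours on both sides -/

lemma choose_four_bound (N : ℕ) (hN : 100 ≤ N) :
    4845 * (N ^ 2 * N ^ 2) < 4 ^ 9 * N.choose 4 := by
  have h := Nat.descFactorial_eq_factorial_mul_choose N 4
  obtain ⟨k, rfl⟩ := Nat.exists_eq_add_of_le hN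
  have h2 : (100 + k).descFactorial 4 = (97 + k) * (98 + k) * (99 + k) * (100 + k) := by
    simp only [Nat.descFactorial_succ, Nat.descFactorial_zero]
    have : 100 + k - 3 = 97 + k := by omega
    have : 100 + k - 2 = 98 + k := by omega
    have : 100 + k - 1 = 99 + k := by omega
    simp only [*, Nat.sub_zero]; ring
  rw [h2] at h
  norm_num [Nat.factorial] at h ⊢
  nlinarith [sq_nonneg k, pow_pos (show 0 < k + 1 by omega) 3]

/-- The density form of `exists_four`, obtained by averaging over all `20`-element subsets:
the number of monochromatic quadruples `l < u < v < r` is at least `N.choose 4 / 4845`, so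
some pair `(u, v)` lies in at least `N ^ 2 / 4 ^ 9` of them. -/
lemma exists_rich_edge (χ : Finset ℕ → Bool) (S : Finset ℕ) (hS : 100 ≤ S.card) :
    ∃ u ∈ S, ∃ v ∈ S, u < v ∧
      S.card ^ 2 ≤ 4 ^ 9 * ((leftNbrs χ S u v).card * (rightNbrs χ S u v).card) := by
  by_contra! hcon
  set N := S.card with hNdef
  set P : Finset (ℕ × ℕ) := (S ×ˢ S).filter fun p => p.1 < p.2 with hP
  set Q : ℕ × ℕ → Finset (ℕ × ℕ) := fun p => leftNbrs χ S p.1 p.2 ×ˢ rightNbrs χ S p.1 p.2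
  set D := N ^ 2 / 4 ^ 9 with hD
  have hcover : Finset.powersetCard 20 S ⊆ P.biUnion fun p => (Q p).biUnion fun q =>
      (Finset.powersetCard 20 S).filter fun T => ({q.1, p.1, p.2, q.2} : Finset ℕ) ⊆ T := by
    intro T hT
    obtain ⟨hTS, hTc⟩ := Finset.mem_powersetCard.mp hT
    obtain ⟨u, hu, v, hv, huv, ⟨l, hl⟩, ⟨r, hr⟩⟩ := exists_four χ T hTc.ge
    simp only [leftNbrs, rightNbrs, Finset.mem_filter] at hl hr
    simp only [Finset.mem_biUnion, Finset.mem_filter, P, Q, Finset.mem_product, leftNbrs,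
      rightNbrs]
    refine ⟨(u, v), ⟨⟨hTS hu, hTS hv⟩, huv⟩, (l, r), ⟨⟨hTS hl.1, hl.2⟩, hTS hr.1, hr.2⟩, hT, ?_⟩
    simp [Finset.insert_subset_iff, hu, hv, hl.1, hr.1]
  have hfour : ∀ p ∈ P, ∀ q ∈ Q p, ((Finset.powersetCard 20 S).filter
      fun T => ({q.1, p.1, p.2, q.2} : Finset ℕ) ⊆ T).card ≤ (N - 4).choose 16 := by
    rintro ⟨u, v⟩ hp ⟨l, r⟩ hq
    simp only [Finset.mem_filter, P, Q, Finset.mem_product, leftNbrs, rightNbrs] at hp hq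
    have hsub : ({l, u, v, r} : Finset ℕ) ⊆ S := by
      simp [Finset.insert_subset_iff, hp.1.1, hp.1.2, hq.1.1, hq.2.1]
    have hc : ({l, u, v, r} : Finset ℕ).card = 4 := by
      have h1 := hp.2
      have h2 := hq.1.2.1
      have h3 := hq.2.2.1
      repeat rw [Finset.card_insert_of_notMem (by simp; omega)]
      simp
    rw [Finset.card_filter_powersetCard_subset _ _ _ hsub (by omega), hc]
  have hQ : ∀ p ∈ P, (Q p).card ≤ D := by
    rintro ⟨u, v⟩ hp
    simp only [Finset.mem_filter, P, Finset.mem_product] at hp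
    have := hcon u hp.1.1 v hp.1.2 hp.2
    rw [hD, Nat.le_div_iff_mul_le (by norm_num), Finset.card_product, mul_comm]
    exact this.le
  have hPc : P.card ≤ N ^ 2 := by
    refine (Finset.card_filter_le _ _).trans ?_
    rw [Finset.card_product, sq]
  have hcount : N.choose 20 ≤ N ^ 2 * (D * (N - 4).choose 16) := by
    rw [hNdef, ← Finset.card_powersetCard]
    refine (Finset.card_le_card hcover).trans ?_
    refine (Finset.card_biUnion_le_card_mul _ _ (D * (N - 4).choose 16) fun p hp => ?_).trans
      (Nat.mul_le_mul_right _ hPc)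
    exact (Finset.card_biUnion_le_card_mul _ _ _ (hfour p hp)).trans
      (Nat.mul_le_mul_right _ (hQ p hp))
  have hmul : N.choose 20 * 4845 = N.choose 4 * (N - 4).choose 16 := by
    have := Nat.choose_mul (n := N) (k := 20) (s := 4) (by norm_num)
    have h2 : Nat.choose 20 4 = 4845 := by decide
    rwa [h2] at this
  have hpos : 0 < (N - 4).choose 16 := Nat.choose_pos (by omega)
  have hle : N.choose 4 ≤ 4845 * (N ^ 2 * D) := by
    refine Nat.le_of_mul_le_mul_right ?_ hpos
    rw [← hmul]
    calc N.choose 20 * 4845 ≤ N ^ 2 * (D * (N - 4).choose 16) * 4845 :=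
          Nat.mul_le_mul_right _ hcount
      _ = 4845 * (N ^ 2 * D) * (N - 4).choose 16 := by ring
  have hDle : 4 ^ 9 * D ≤ N ^ 2 := Nat.mul_div_le _ _
  have hb := choose_four_bound N hS
  have : 4 ^ 9 * N.choose 4 ≤ 4845 * (N ^ 2 * N ^ 2) :=
    calc 4 ^ 9 * N.choose 4 ≤ 4 ^ 9 * (4845 * (N ^ 2 * D)) := Nat.mul_le_mul_left _ hle
      _ = 4845 * (N ^ 2 * (4 ^ 9 * D)) := by ring
      _ ≤ _ := by gcongr
  omega

/-! ### The recursion -/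

lemma SqPathIn.mono {χ : Finset ℕ → Bool} {c : Bool} {m m' : ℕ} {S S' : Finset ℕ}
    (h : SqPathIn χ c m S) (hm : m' ≤ m) (hS : S ⊆ S') : SqPathIn χ c m' S' := by
  obtain ⟨x, h1, h2, h3⟩ := h
  exact ⟨x, fun i j hij hj => h1 i j hij (by omega), fun i hi => hS (h2 i (by omega)),
    fun i j hij hj => h3 i j hij (by omega)⟩

/-- Two squares of paths in the common neighbourhoods of an edge `uv` are joined through `uv`:
vertices on different sides of `uv` are at distance at least `3` along the resulting path. -/
lemma SqPathIn.glue {χ : Finset ℕ → Bool} {c : Bool} {S : Finset ℕ} {u v a b : ℕ}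
    (hu : u ∈ S) (hv : v ∈ S) (huv : u < v) (hc : χ {u, v} = c)
    (hl : SqPathIn χ c a (leftNbrs χ S u v)) (hr : SqPathIn χ c b (rightNbrs χ S u v)) :
    SqPathIn χ c (a + b + 2) S := by
  obtain ⟨x, x1, x2, x3⟩ := hl
  obtain ⟨y, y1, y2, y3⟩ := hr
  simp only [leftNbrs, rightNbrs, Finset.mem_filter, hc] at x2 y2
  set z : ℕ → ℕ := fun i => if i < a then x i else if i = a then u else if i = a + 1 then v
    else y (i - (a + 2)) with hz
  have hcases : ∀ i < a + b + 2, (i < a ∧ z i = x i) ∨ (i = a ∧ z i = u) ∨ (i = a + 1 ∧ z i = v) ∨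
      ∃ k < b, i = a + 2 + k ∧ z i = y k := by
    intro i hi
    rcases lt_trichotomy i a with h | h | h
    · exact Or.inl ⟨h, by simp [hz, h]⟩
    · exact Or.inr (Or.inl ⟨h, by simp [hz, h]⟩)
    · rcases Nat.lt_or_ge i (a + 2) with h' | h'
      · obtain rfl : i = a + 1 := by omega
        exact Or.inr (Or.inr (Or.inl ⟨rfl, by simp [hz]⟩))
      · obtain ⟨k, rfl⟩ := Nat.exists_eq_add_of_le h'
        refine Or.inr (Or.inr (Or.inr ⟨k, by omega, rfl, ?_⟩))
        have h1 : ¬ a + 2 + k < a := by omega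
        have h2 : a + 2 + k ≠ a := by omega
        have h3 : a + 2 + k ≠ a + 1 := by omega
        simp [hz, h1, h2, h3]
  refine ⟨z, ?_, ?_, ?_⟩
  · intro i j hij hj
    rcases hcases i (by omega) with ⟨hi, ei⟩ | ⟨hi, ei⟩ | ⟨hi, ei⟩ | ⟨k, hk, hi, ei⟩ <;>
    rcases hcases j hj with ⟨hj', ej⟩ | ⟨hj', ej⟩ | ⟨hj', ej⟩ | ⟨k', hk', hj', ej⟩ <;>
    rw [ei, ej] <;>
    first
    | omega
    | exact x1 i j hij hj'
    | exact y1 k k' (by omega) hk'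
    | (have := (x2 i hi).2.1; omega)
    | (have := (y2 k' hk').2.1; omega)
    | (have := (x2 i hi).2.1; have := (y2 k' hk').2.1; omega)
  · intro i hi
    rcases hcases i hi with ⟨hi, ei⟩ | ⟨hi, ei⟩ | ⟨hi, ei⟩ | ⟨k, hk, hi, ei⟩ <;> rw [ei]
    · exact (x2 i hi).1
    · exact hu
    · exact hv
    · exact (y2 k hk).1
  · intro i j hij hj hd
    rcases hcases i (by omega) with ⟨hi, ei⟩ | ⟨hi, ei⟩ | ⟨hi, ei⟩ | ⟨k, hk, hi, ei⟩ <;>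
    rcases hcases j hj with ⟨hj', ej⟩ | ⟨hj', ej⟩ | ⟨hj', ej⟩ | ⟨k', hk', hj', ej⟩ <;>
    rw [ei, ej] <;>
    first
    | omega
    | exact x3 i j hij hj' hd
    | exact y3 k k' (by omega) hk' (by omega)
    | exact (x2 i hi).2.2.1
    | exact (x2 i hi).2.2.2
    | exact (y2 k' hk').2.2.1
    | exact (y2 k' hk').2.2.2

/-- The numerical heart of the recursion: if sets of sizes `d` and `e` with
`N ^ 2 ≤ 4 ^ 9 * (d * e)` are each assigned the largest path length the bound
`100 * (· * m) ^ 9` guarantees, these lengths and the two joining vertices add up to `s`. -/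
lemma exists_split (N s m d e : ℕ) (hm : 1 ≤ m) (hN : 100 * (s * m) ^ 9 ≤ N)
    (hde : N ^ 2 ≤ 4 ^ 9 * (d * e)) :
    ∃ a b, 100 * (a * m) ^ 9 ≤ d ∧ 100 * (b * m) ^ 9 ≤ e ∧ s ≤ a + b + 2 := by
  have hex : ∀ d : ℕ, ∃ a, 100 * (a * m) ^ 9 ≤ d ∧ d < 100 * ((a + 1) * m) ^ 9 := by
    intro d
    set p : ℕ → Prop := fun a => 100 * (a * m) ^ 9 ≤ d
    have h0 : p 0 := by simp [p]
    have hbd : ∀ a, p a → a ≤ d := by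
      intro a ha
      calc a ≤ a * m := Nat.le_mul_of_pos_right _ hm
        _ ≤ (a * m) ^ 9 := Nat.le_self_pow (by norm_num) _
        _ ≤ 100 * (a * m) ^ 9 := by omega
        _ ≤ d := ha
    classical
    refine ⟨Nat.findGreatest p d, Nat.findGreatest_spec (Nat.zero_le _) h0, ?_⟩
    by_contra! h
    have := Nat.le_findGreatest (P := p) (hbd _ h) h
    omega
  obtain ⟨a, ha, ha'⟩ := hex d
  obtain ⟨b, hb, hb'⟩ := hex e
  refine ⟨a, b, ha, hb, ?_⟩
  by_contra! hlt
  have hamgm : 4 * ((a + 1) * (b + 1)) ≤ s ^ 2 :=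
    calc 4 * ((a + 1) * (b + 1)) ≤ (a + 1 + (b + 1)) ^ 2 := by
          zify; nlinarith [sq_nonneg ((a : ℤ) - b)]
      _ ≤ s ^ 2 := Nat.pow_le_pow_left (by omega) 2
  have : N ^ 2 < N ^ 2 :=
    calc N ^ 2 ≤ 4 ^ 9 * (d * e) := hde
      _ < 4 ^ 9 * ((100 * ((a + 1) * m) ^ 9) * (100 * ((b + 1) * m) ^ 9)) := by
          gcongr 4 ^ 9 * ?_
          exact Nat.mul_lt_mul'' ha' hb'
      _ = 100 ^ 2 * (4 * ((a + 1) * (b + 1))) ^ 9 * m ^ 18 := by ring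
      _ ≤ 100 ^ 2 * (s ^ 2) ^ 9 * m ^ 18 := by gcongr
      _ = (100 * (s * m) ^ 9) ^ 2 := by ring
      _ ≤ N ^ 2 := Nat.pow_le_pow_left hN 2
  exact lt_irrefl _ this

theorem sqPath_or_sqPath (χ : Finset ℕ → Bool) (S : Finset ℕ) (s m : ℕ)
    (hS : 100 * (s * m) ^ 9 ≤ S.card) : SqPathIn χ true s S ∨ SqPathIn χ false m S := by
  induction hn : S.card using Nat.strong_induction_on generalizing S s m with
  | _ n ih =>
  subst hn
  rcases Nat.eq_zero_or_pos s with rfl | hs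
  · exact Or.inl ⟨id, by simp, by simp, by simp⟩
  rcases Nat.eq_zero_or_pos m with rfl | hm
  · exact Or.inr ⟨id, by simp, by simp, by simp⟩
  have h100 : 100 ≤ S.card :=
    le_trans (Nat.le_mul_of_pos_right _ (by positivity)) hS
  obtain ⟨u, hu, v, hv, huv, hrich⟩ := exists_rich_edge χ S h100
  have hLS : leftNbrs χ S u v ⊆ S := Finset.filter_subset _ _
  have hRS : rightNbrs χ S u v ⊆ S := Finset.filter_subset _ _
  have hL : (leftNbrs χ S u v).card < S.card :=
    Finset.card_lt_card ⟨hLS, fun h => by simpa [leftNbrs] using h hu⟩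
  have hR : (rightNbrs χ S u v).card < S.card :=
    Finset.card_lt_card ⟨hRS, fun h => by simpa [rightNbrs] using h hv⟩
  cases hc : χ {u, v} with
  | true =>
    obtain ⟨a, b, ha, hb, hab⟩ := exists_split _ s m _ _ hm hS hrich
    rcases ih _ hL _ a m ha rfl with hl | hl
    · rcases ih _ hR _ b m hb rfl with hr | hr
      · exact Or.inl ((SqPathIn.glue hu hv huv hc hl hr).mono hab subset_rfl)
      · exact Or.inr (hr.mono le_rfl hRS)
    · exact Or.inr (hl.mono le_rfl hLS)
  | false =>
    rw [mul_comm s m] at hS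
    obtain ⟨a, b, ha, hb, hab⟩ := exists_split _ m s _ _ hs hS hrich
    rw [mul_comm a s] at ha
    rw [mul_comm b s] at hb
    rcases ih _ hL _ s a ha rfl with hl | hl
    · exact Or.inl (hl.mono le_rfl hLS)
    · rcases ih _ hR _ s b hb rfl with hr | hr
      · exact Or.inl (hr.mono le_rfl hRS)
      · exact Or.inr ((SqPathIn.glue hu hv huv hc hl hr).mono hab subset_rfl)

lemma SqPathIn.hasPowPath {χ : Finset ℕ → Bool} {c : Bool} {m N : ℕ}
    (h : SqPathIn χ c m (Finset.Icc 1 N)) : HasPowPath 2 m N c χ := by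
  obtain ⟨x, h1, h2, h3⟩ := h
  -- `HasPowPath` asks for a globally increasing sequence, so the tail is sent beyond `N`.
  refine ⟨fun i => if i < m then x i else N + 1 + i, fun i j hij => ?_, fun i hi => ?_,
    fun i j hij hj hd => ?_⟩
  · have := h1 i j hij
    have := fun h => Finset.mem_Icc.mp (h2 i h)
    dsimp only
    grind
  · simpa [hi] using h2 i hi
  · simpa [hj, hij.trans hj] using h3 i j hij hj hd

lemma powPathRamsey_le (n : ℕ) : powPathRamsey 2 n n ≤ 100 * n ^ 18 := by
  refine Nat.sInf_le fun χ => ?_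
  have h := sqPath_or_sqPath χ (Finset.Icc 1 (100 * n ^ 18)) n n
    (by rw [Nat.card_Icc]; exact le_of_eq (by rw [Nat.add_sub_cancel]; ring))
  exact h.imp SqPathIn.hasPowPath SqPathIn.hasPowPath

/-- There is an absolute constant `c > 0` such that for every integer
`n > 1`, the ordered Ramsey number of the square of the path satisfies
`r(P_n^2, P_n^2) < c · n^{19.487}`. -/
theorem stmt_0 :
    ∃ c : ℝ, 0 < c ∧ ∀ n : ℕ, 1 < n →
      (powPathRamsey 2 n n : ℝ) < c * (n : ℝ) ^ (19.487 : ℝ) := by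
  refine ⟨101, by norm_num, fun n hn => ?_⟩
  have hn1 : (1 : ℝ) ≤ n := by exact_mod_cast hn.le
  have h1 : (powPathRamsey 2 n n : ℝ) ≤ 100 * (n : ℝ) ^ 18 := by
    exact_mod_cast powPathRamsey_le n
  have h2 : (n : ℝ) ^ 18 ≤ (n : ℝ) ^ (19.487 : ℝ) := by
    rw [← Real.rpow_natCast]
    exact Real.rpow_le_rpow_of_exponent_le hn1 (by norm_num)
  have h3 : 0 < (n : ℝ) ^ (19.487 : ℝ) := Real.rpow_pos_of_pos (by linarith) _
  linarith
end

section
/- For every integer n ≥ 3, r_3(4, P_n) < 6·n·m, where m = r(P_n^2, P_n^2). That is, every red/blue coloring of the 3-element subsets of {1,...,6nm} contains a red copy of the complete 3-uniform hypergraph on 4 vertices or a blue ordered copy of the 3-uniform tight path P_n. -/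
/-! ### Finiteness of the graph Ramsey number -/

/-- Ramsey's theorem for two colours, inside an arbitrary finite set of naturals. -/
lemma exists_mono_clique (a b : ℕ) : ∃ R, ∀ (χ : Finset ℕ → Bool) (X : Finset ℕ), R ≤ X.card →
    (∃ S ⊆ X, S.card = a ∧ ∀ x ∈ S, ∀ y ∈ S, x ≠ y → χ {x, y} = true) ∨
    (∃ S ⊆ X, S.card = b ∧ ∀ x ∈ S, ∀ y ∈ S, x ≠ y → χ {x, y} = false) := by
  induction a generalizing b with
  | zero => exact ⟨0, fun χ X _ => Or.inl ⟨∅, by simp⟩⟩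
  | succ a iha =>
    induction b with
    | zero => exact ⟨0, fun χ X _ => Or.inr ⟨∅, by simp⟩⟩
    | succ b ihb =>
      obtain ⟨R₁, h₁⟩ := iha (b + 1)
      obtain ⟨R₂, h₂⟩ := ihb
      refine ⟨R₁ + R₂ + 1, fun χ X hX => ?_⟩
      obtain ⟨v, hv⟩ : X.Nonempty := Finset.card_pos.1 (by omega)
      have hc := Finset.card_filter_add_card_filter_not (s := X.erase v)
        (fun x => χ {v, x} = true)
      rw [Finset.card_erase_of_mem hv] at hc
      -- adjoining `v` to a clique in one of its monochromatic neighbourhoods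
      have ext : ∀ (c : Bool) (k : ℕ) (S : Finset ℕ),
          S ⊆ (X.erase v).filter (fun x => χ {v, x} = c) → S.card = k →
          (∀ x ∈ S, ∀ y ∈ S, x ≠ y → χ {x, y} = c) →
          ∃ S ⊆ X, S.card = k + 1 ∧ ∀ x ∈ S, ∀ y ∈ S, x ≠ y → χ {x, y} = c := by
        intro c k S hS hk hp
        have hS' : ∀ x ∈ S, x ≠ v ∧ x ∈ X ∧ χ {v, x} = c := by
          intro x hx
          have := hS hx
          simp only [Finset.mem_filter, Finset.mem_erase] at this
          tauto
        refine ⟨insert v S, ?_, ?_, ?_⟩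
        · intro x hx
          rcases Finset.mem_insert.1 hx with rfl | hx
          · exact hv
          · exact (hS' x hx).2.1
        · rw [Finset.card_insert_of_notMem (fun h => (hS' v h).1 rfl), hk]
        · intro x hx y hy hxy
          rcases Finset.mem_insert.1 hx with rfl | hx' <;>
            rcases Finset.mem_insert.1 hy with rfl | hy'
          · exact absurd rfl hxy
          · exact (hS' y hy').2.2
          · rw [Finset.pair_comm]
            exact (hS' x hx').2.2
          · exact hp x hx' y hy' hxy
      by_cases hR : R₁ ≤ ((X.erase v).filter (fun x => χ {v, x} = true)).card
      · rcases h₁ χ _ hR with ⟨S, hS, hk, hp⟩ | ⟨S, hS, hk, hp⟩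
        · exact Or.inl (ext _ _ S hS hk hp)
        · exact Or.inr ⟨S, fun x hx => Finset.mem_of_mem_erase
            (Finset.mem_of_mem_filter x (hS hx)), hk, hp⟩
      · have hR₂ : R₂ ≤ ((X.erase v).filter (fun x => χ {v, x} = false)).card := by
          simp only [Bool.not_eq_true] at hc
          omega
        rcases h₂ χ _ hR₂ with ⟨S, hS, hk, hp⟩ | ⟨S, hS, hk, hp⟩
        · exact Or.inl ⟨S, fun x hx => Finset.mem_of_mem_erase
            (Finset.mem_of_mem_filter x (hS hx)), hk, hp⟩
        · exact Or.inr (ext _ _ S hS hk hp)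

/-- The increasing enumeration of a finite set, continued arbitrarily to all of `ℕ`. -/
lemma exists_enum (X : Finset ℕ) : ∃ e : ℕ → ℕ, StrictMono e ∧ ∀ i < X.card, e i ∈ X := by
  refine ⟨fun i => if h : i < X.card then X.orderEmbOfFin rfl ⟨i, h⟩ else X.sup id + 1 + i,
    ?_, ?_⟩
  · intro i j hij
    dsimp only
    split_ifs with hi hj hj
    · exact (X.orderEmbOfFin rfl).strictMono hij
    · have := Finset.le_sup (f := id) (X.orderEmbOfFin_mem rfl ⟨i, hi⟩)
      simp only [id] at this
      omega
    · omega
    · omega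
  · intro i hi
    simp only [hi, dif_pos]
    exact X.orderEmbOfFin_mem rfl _

lemma powPath_of_clique {ℓ n N : ℕ} {c : Bool} {χ : Finset ℕ → Bool} {S : Finset ℕ}
    (hS : S ⊆ Finset.Icc 1 N) (hn : S.card = n)
    (h : ∀ x ∈ S, ∀ y ∈ S, x ≠ y → χ {x, y} = c) : HasPowPath ℓ n N c χ := by
  obtain ⟨e, he, heS⟩ := exists_enum S
  rw [hn] at heS
  exact ⟨e, he, fun i hi => hS (heS i hi), fun i j hij hj _ =>
    h _ (heS i (hij.trans hj)) _ (heS j hj) (he hij).ne⟩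

lemma powPathRamsey_spec (ℓ n : ℕ) (χ : Finset ℕ → Bool) :
    HasPowPath ℓ n (powPathRamsey ℓ n n) true χ ∨
      HasPowPath ℓ n (powPathRamsey ℓ n n) false χ := by
  have hne : {N | ∀ χ : Finset ℕ → Bool,
      HasPowPath ℓ n N true χ ∨ HasPowPath ℓ n N false χ}.Nonempty := by
    obtain ⟨R, hR⟩ := exists_mono_clique n n
    refine ⟨R, fun χ => ?_⟩
    rcases hR χ (Finset.Icc 1 R) (by simp) with ⟨S, hS, hk, hp⟩ | ⟨S, hS, hk, hp⟩
    · exact Or.inl (powPath_of_clique hS hk hp)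
    · exact Or.inr (powPath_of_clique hS hk hp)
  exact Nat.sInf_mem hne χ

lemma powPathRamsey_pos (ℓ : ℕ) {n : ℕ} (hn : 0 < n) : 0 < powPathRamsey ℓ n n := by
  rcases powPathRamsey_spec ℓ n (fun _ => true) with ⟨x, _, hx, _⟩ | ⟨x, _, hx, _⟩ <;>
  · have := Finset.mem_Icc.1 (hx 0 hn)
    omega

/-! ### Blue tight paths with prescribed last pair -/

/-- `BlueEnd χ a u v` says that some blue `3`-uniform tight path on `a ≥ 2` positive vertices has
`u < v` as its last two vertices.  Since final segments of tight paths are tight paths, this says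
that the longest such path has at least `a` vertices. -/
inductive BlueEnd (χ : Finset ℕ → Bool) : ℕ → ℕ → ℕ → Prop
  | pair {u v : ℕ} (hu : 1 ≤ u) (huv : u < v) : BlueEnd χ 2 u v
  | snoc {a u v w : ℕ} (h : BlueEnd χ a u v) (hvw : v < w) (hc : χ {u, v, w} = false) :
      BlueEnd χ (a + 1) v w

lemma BlueEnd.lt {χ : Finset ℕ → Bool} {a u v : ℕ} (h : BlueEnd χ a u v) : 1 ≤ u ∧ u < v := by
  induction h with
  | pair hu huv => exact ⟨hu, huv⟩
  | snoc h hvw hc ih => exact ⟨by omega, hvw⟩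

lemma image_range_three (f : ℕ → ℕ) : (Finset.range 3).image f = {f 0, f 1, f 2} := by
  ext t
  simp [Finset.range_add_one]
  tauto

lemma BlueEnd.exists_seq {χ : Finset ℕ → Bool} {a u v : ℕ} (h : BlueEnd χ a u v) :
    2 ≤ a ∧ ∃ x : ℕ → ℕ, StrictMono x ∧ 1 ≤ x 0 ∧ x (a - 2) = u ∧ x (a - 1) = v ∧
      ∀ j, j + 3 ≤ a → χ {x j, x (j + 1), x (j + 2)} = false := by
  induction h with
  | @pair u v hu huv =>
    refine ⟨le_rfl, fun i => if i = 0 then u else v + (i - 1), ?_, by simpa, by simp, by simp,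
      fun j hj => by omega⟩
    intro i j hij
    dsimp only
    split_ifs <;> omega
  | @snoc a u v w h hvw hc ih =>
    obtain ⟨ha, x, hx, h0, hu, hv, hw⟩ := ih
    refine ⟨by omega, fun i => if i < a then x i else w + (i - a), ?_, ?_, ?_, ?_, ?_⟩
    · intro i j hij
      dsimp only
      split_ifs with hi hj hj
      · exact hx hij
      · have : x i ≤ x (a - 1) := hx.monotone (by omega)
        omega
      · omega
      · omega
    · simp only [show 0 < a by omega, if_true, h0]
    · have : a + 1 - 2 = a - 1 := by omega
      simp only [this, show a - 1 < a by omega, if_true, hv]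
    · simp
    · intro j hj
      rcases Nat.lt_or_ge (j + 2) a with hja | hja
      · simp only [show j < a by omega, show j + 1 < a by omega, hja, if_true]
        exact hw j (by omega)
      · have e₀ : j = a - 2 := by omega
        have e₁ : j + 1 = a - 1 := by omega
        have e₂ : j + 2 = a := by omega
        simp only [show j < a by omega, show j + 1 < a by omega, e₂, lt_irrefl, if_true, if_false,
          Nat.sub_self, Nat.add_zero]
        rw [e₁, hv, e₀, hu]
        exact hc

lemma BlueEnd.hasBlueTightPath {χ : Finset ℕ → Bool} {a u v n N : ℕ} (h : BlueEnd χ a u v)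
    (hn : n ≤ a) (hv : v ≤ N) : HasBlueTightPath 3 n N χ := by
  obtain ⟨-, x, hx, h0, -, hxv, hw⟩ := h.exists_seq
  refine ⟨x, hx, fun i hi => Finset.mem_Icc.2 ⟨?_, ?_⟩, fun j hj => ?_⟩
  · exact h0.trans (hx.monotone (Nat.zero_le i))
  · have : x i ≤ x (a - 1) := hx.monotone (by omega)
    omega
  · rw [image_range_three]
    exact hw j (by omega)

/-! ### Red links -/

lemma hasRedClique_of_four {χ : Finset ℕ → Bool} {N w x y z : ℕ} (hw : w ∈ Finset.Icc 1 N)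
    (hx : x ∈ Finset.Icc 1 N) (hy : y ∈ Finset.Icc 1 N) (hz : z ∈ Finset.Icc 1 N)
    (hwx : w ≠ x) (hwy : w ≠ y) (hwz : w ≠ z) (hxy : x ≠ y) (hxz : x ≠ z) (hyz : y ≠ z)
    (h₁ : χ {w, x, y} = true) (h₂ : χ {w, x, z} = true) (h₃ : χ {w, y, z} = true)
    (h₄ : χ {x, y, z} = true) : HasRedClique 3 4 N χ := by
  have hcard : ({w, x, y, z} : Finset ℕ).card = 4 := by
    rw [Finset.card_eq_succ]
    exact ⟨w, {x, y, z}, by simp [*], rfl, by simp [*]⟩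
  refine ⟨{w, x, y, z}, ?_, hcard, fun e he hec => ?_⟩
  · intro t ht
    simp only [Finset.mem_insert, Finset.mem_singleton] at ht
    rcases ht with rfl | rfl | rfl | rfl <;> assumption
  · have h1 : (({w, x, y, z} : Finset ℕ) \ e).card = 1 := by
      rw [Finset.card_sdiff_of_subset he, hcard, hec]
    obtain ⟨t, ht⟩ := Finset.card_eq_one.1 h1
    have hte : e = ({w, x, y, z} : Finset ℕ).erase t := by
      rw [Finset.erase_eq, ← ht, Finset.sdiff_sdiff_eq_self he]
    have htm : t ∈ ({w, x, y, z} : Finset ℕ) :=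
      Finset.sdiff_subset (ht ▸ Finset.mem_singleton_self t)
    simp only [Finset.mem_insert, Finset.mem_singleton] at htm
    rw [hte]
    rcases htm with rfl | rfl | rfl | rfl
    · convert h₄ using 2; ext s; simp; grind
    · convert h₃ using 2; ext s; simp; grind
    · convert h₂ using 2; ext s; simp; grind
    · convert h₁ using 2; ext s; simp; grind

/-- A square of a path in the red link of a vertex `w` is a blue tight path, unless there is a
red `K_4`. -/
lemma bluePath_of_red_link {χ : Finset ℕ → Bool} {n N w : ℕ} {z : ℕ → ℕ}
    (hw : w ∈ Finset.Icc 1 N) (hz : StrictMono z) (hzN : ∀ i < n, z i ∈ Finset.Icc 1 N)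
    (hzw : ∀ i < n, w ≠ z i)
    (hred : ∀ i j, i < j → j < n → j - i ≤ 2 → χ {w, z i, z j} = true) :
    HasRedClique 3 4 N χ ∨ HasBlueTightPath 3 n N χ := by
  by_cases hcl : HasRedClique 3 4 N χ
  · exact Or.inl hcl
  refine Or.inr ⟨z, hz, hzN, fun j hj => ?_⟩
  rw [image_range_three]
  by_contra hne
  rw [Bool.not_eq_false] at hne
  exact hcl (hasRedClique_of_four hw (hzN j (by omega)) (hzN (j + 1) (by omega))
    (hzN (j + 2) (by omega)) (hzw j (by omega)) (hzw (j + 1) (by omega)) (hzw (j + 2) (by omega))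
    (hz (by omega)).ne (hz (by omega)).ne (hz (by omega)).ne
    (hred _ _ (by omega) (by omega) (by omega)) (hred _ _ (by omega) (by omega) (by omega))
    (hred _ _ (by omega) (by omega) (by omega)) hne)

/-- If the pairs `u, x` end blue paths on `a` vertices and the pairs `x, v` end none on `a + 2`
vertices, then each pair of vertices in `X` forms a red triple with `u` or with `v`; the defining
property of `r(P_n^2, P_n^2)` then puts a square of a path into one of the two red links. -/
lemma clique_or_path_of_sandwich {χ : Finset ℕ → Bool} {n N a u v : ℕ} {X : Finset ℕ}
    (hn : 0 < n) (hX : powPathRamsey 2 n n ≤ X.card) (hv : v ≤ N) (hXv : ∀ x ∈ X, x < v)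
    (hu : ∀ x ∈ X, BlueEnd χ a u x) (hxv : ∀ x ∈ X, ¬ BlueEnd χ (a + 2) x v) :
    HasRedClique 3 4 N χ ∨ HasBlueTightPath 3 n N χ := by
  have key : ∀ x ∈ X, ∀ y ∈ X, x < y → χ {u, x, y} = false → χ {v, x, y} = true := by
    intro x _ y hy hxy hblue
    by_contra hne
    rw [Bool.not_eq_true] at hne
    refine hxv y hy (((hu x ‹_›).snoc hxy hblue).snoc (hXv y hy) ?_)
    rw [← hne]
    congr 1
    ext s
    simp only [Finset.mem_insert, Finset.mem_singleton]
    tauto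
  obtain ⟨e, he, heX⟩ := exists_enum X
  -- The graph `P_n^2` is searched for on `{1, …, m}`, while the enumeration `e` starts at `0`.
  have main : ∀ y : ℕ → ℕ, StrictMono y →
      (∀ i < n, y i ∈ Finset.Icc 1 (powPathRamsey 2 n n)) →
      StrictMono (fun i => e (y i - 1)) ∧ ∀ i < n, e (y i - 1) ∈ X := by
    intro y hy hyN
    have h0 := (Finset.mem_Icc.1 (hyN 0 hn)).1
    refine ⟨fun i j hij => he ?_, fun i hi => heX _ ?_⟩
    · have h1 := hy hij
      have h2 := hy.monotone (Nat.zero_le i)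
      omega
    · have := Finset.mem_Icc.1 (hyN i hi)
      omega
  have hXN : ∀ x ∈ X, x ∈ Finset.Icc 1 N ∧ u ∈ Finset.Icc 1 N ∧ v ∈ Finset.Icc 1 N ∧ u < x := by
    intro x hx
    have h1 := (hu x hx).lt
    have h2 := hXv x hx
    simp only [Finset.mem_Icc]
    omega
  rcases powPathRamsey_spec 2 n (fun s => χ (insert u (s.image fun i => e (i - 1)))) with
    ⟨y, hy, hyN, hc⟩ | ⟨y, hy, hyN, hc⟩ <;>
    simp only [Finset.image_insert, Finset.image_singleton] at hc <;>
    obtain ⟨hz, hzX⟩ := main y hy hyN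
  · exact bluePath_of_red_link (hXN _ (hzX 0 hn)).2.1 hz (fun i hi => (hXN _ (hzX i hi)).1)
      (fun i hi => (hXN _ (hzX i hi)).2.2.2.ne) hc
  · exact bluePath_of_red_link (hXN _ (hzX 0 hn)).2.2.1 hz (fun i hi => (hXN _ (hzX i hi)).1)
      (fun i hi => (hXv _ (hzX i hi)).ne') fun i j hij hj hd =>
        key _ (hzX i (hij.trans hj)) _ (hzX j hj) (hz hij) (hc i j hij hj hd)

/-! ### Passing through the blocks -/

/-- If each of the `4m` elements of `V` is related to all but fewer than `m` elements of `X`, and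
`|X| ≥ 2m`, then some element of `X` is related to at least half of `V`. -/
lemma exists_large_degree {m : ℕ} (hm : 0 < m) {X V : Finset ℕ} (r : ℕ → ℕ → Prop)
    [∀ x v, Decidable (r x v)] (hX : 2 * m ≤ X.card) (hV : V.card = 4 * m)
    (h : ∀ v ∈ V, (X.filter fun x => ¬ r x v).card < m) :
    ∃ x ∈ X, 2 * m ≤ (V.filter fun v => r x v).card := by
  by_contra! hcon
  have hdc := Finset.sum_card_bipartiteAbove_eq_sum_card_bipartiteBelow (s := X) (t := V) r
  have hlt : ∑ x ∈ X, (V.bipartiteAbove r x).card < ∑ x ∈ X, 2 * m :=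
    Finset.sum_lt_sum_of_nonempty (Finset.card_pos.1 (by omega)) hcon
  have hge : ∑ v ∈ V, (X.card - m) ≤ ∑ v ∈ V, (X.bipartiteBelow r v).card := by
    refine Finset.sum_le_sum fun v hv => ?_
    have h1 := h v hv
    have h2 := Finset.card_filter_add_card_filter_not (s := X) (fun x => r x v)
    simp only [Finset.bipartiteBelow]
    omega
  simp only [Finset.sum_const, smul_eq_mul, hV] at hlt hge
  obtain ⟨t, ht⟩ := Nat.exists_eq_add_of_le hX
  have h3 : X.card - m = m + t := by omega
  rw [h3] at hge
  rw [ht] at hlt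
  nlinarith

lemma block_step {χ : Finset ℕ → Bool} {n N a u A : ℕ} {X : Finset ℕ} (hn : 0 < n)
    (hN : A + 4 * powPathRamsey 2 n n ≤ N) (hX : 2 * powPathRamsey 2 n n ≤ X.card)
    (hXA : ∀ x ∈ X, x ≤ A) (hu : ∀ x ∈ X, BlueEnd χ a u x) :
    (HasRedClique 3 4 N χ ∨ HasBlueTightPath 3 n N χ) ∨
    ∃ x, ∃ Y : Finset ℕ, 2 * powPathRamsey 2 n n ≤ Y.card ∧
      (∀ y ∈ Y, y ≤ A + 4 * powPathRamsey 2 n n) ∧ ∀ y ∈ Y, BlueEnd χ (a + 2) x y := by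
  classical
  set m := powPathRamsey 2 n n with hm
  by_cases h : ∀ v ∈ Finset.Ioc A (A + 4 * m),
      (X.filter fun x => ¬ BlueEnd χ (a + 2) x v).card < m
  · obtain ⟨x, -, hx⟩ := exists_large_degree (m := m) (powPathRamsey_pos 2 hn)
      (fun x v => BlueEnd χ (a + 2) x v) hX (by simp) h
    refine Or.inr ⟨x, _, hx, fun y hy => ?_, fun y hy => (Finset.mem_filter.1 hy).2⟩
    exact (Finset.mem_Ioc.1 (Finset.mem_filter.1 hy).1).2
  · push Not at h
    obtain ⟨v, hv, hc⟩ := h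
    rw [Finset.mem_Ioc] at hv
    refine Or.inl (clique_or_path_of_sandwich (a := a) (u := u) (v := v) hn hc (by omega)
      (fun x hx => ?_) (fun x hx => hu x (Finset.mem_filter.1 hx).1)
      (fun x hx => (Finset.mem_filter.1 hx).2))
    have := hXA x (Finset.mem_filter.1 hx).1
    omega

lemma clique_or_path {n N : ℕ} (hn : 3 ≤ n) (hN : 4 * n * powPathRamsey 2 n n ≤ N)
    (χ : Finset ℕ → Bool) : HasRedClique 3 4 N χ ∨ HasBlueTightPath 3 n N χ := by
  by_contra hcon
  have hm := powPathRamsey_pos 2 (show 0 < n by omega)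
  set m := powPathRamsey 2 n n with hmdef
  have main : ∀ j, j < n → ∃ u, ∃ X : Finset ℕ, 2 * m ≤ X.card ∧
      (∀ x ∈ X, x ≤ 4 * (j + 1) * m) ∧ ∀ x ∈ X, BlueEnd χ (2 + 2 * j) u x := by
    intro j
    induction j with
    | zero =>
      intro _
      refine ⟨1, Finset.Ioc 1 (4 * m), by simp; omega, fun x hx => ?_, fun x hx => ?_⟩
      · simpa using (Finset.mem_Ioc.1 hx).2
      · exact BlueEnd.pair le_rfl (Finset.mem_Ioc.1 hx).1
    | succ j ih =>
      intro hj
      obtain ⟨u, X, hX, hXA, hu⟩ := ih (by omega)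
      have hstep : 4 * (j + 1 + 1) * m = 4 * (j + 1) * m + 4 * m := by ring
      have hle : 4 * (j + 1 + 1) * m ≤ 4 * n * m := by gcongr; omega
      rw [hstep]
      exact (block_step (by omega) (by omega) hX hXA hu).resolve_left hcon
  obtain ⟨u, X, hX, hXA, hu⟩ := main (n - 1) (by omega)
  obtain ⟨x, hx⟩ : X.Nonempty := Finset.card_pos.1 (by omega)
  refine hcon (Or.inr ((hu x hx).hasBlueTightPath (by omega) ((hXA x hx).trans ?_)))
  rwa [Nat.sub_add_cancel (by omega)]

/-- For every integer `n ≥ 3`, `r_3(4, P_n) < 6·n·m` where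
`m = r(P_n^2, P_n^2)`; that is, every red/blue coloring of the 3-element subsets of
`{1,...,6nm}` contains a red `K_4^3` or a blue ordered 3-uniform tight path `P_n`. -/
theorem stmt_2 :
    ∀ n : ℕ, 3 ≤ n →
      cliquePathRamsey 3 4 n < 6 * n * powPathRamsey 2 n n ∧
      ∀ χ : Finset ℕ → Bool,
        HasRedClique 3 4 (6 * n * powPathRamsey 2 n n) χ ∨
        HasBlueTightPath 3 n (6 * n * powPathRamsey 2 n n) χ := by
  intro n hn
  have hm := powPathRamsey_pos 2 (show 0 < n by omega)
  have hpos : 0 < n * powPathRamsey 2 n n := Nat.mul_pos (by omega) hm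
  refine ⟨?_, fun χ => clique_or_path hn (by gcongr; omega) χ⟩
  have hle : cliquePathRamsey 3 4 n ≤ 4 * n * powPathRamsey 2 n n :=
    Nat.sInf_le fun χ => clique_or_path hn le_rfl χ
  nlinarith
end
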